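/- arXiv:1708.09845 — 4 statements merged into one kernel-verified Lean document; each statement's English description precedes it below -/
import Mathlib

section
/- Let A be a real m×n matrix of full column rank and G an m×m real symmetric positive definite matrix; set Ĝ = Aᵀ G A. Let Ωⱼ ∈ ℝ^{n×l_j} for j = 1, …, s be matrices such that each A Ωⱼ has full column rank, and suppose the concatenated matrix 𝛀 = [Ω₁, …, Ω_s] ∈ ℝ^{n×Σⱼ l_j} has full row rank n. Then for any probabilities p₁, …, p_s > 0, the matrix E[W] = Σⱼ pⱼ Ωⱼ (Ωⱼᵀ Ĝ Ωⱼ)⁻¹ Ωⱼᵀ is symmetric positive definite. (Note each Ωⱼᵀ Ĝ Ωⱼ = (AΩⱼ)ᵀ G (AΩⱼ) is invertible since AΩⱼ has full column rank and G is positive definite.) -/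
open Matrix

/-!
With `𝛀 = [Ω₁, …, Ω_s]`, the sum `∑ⱼ pⱼ Ωⱼ (Ωⱼᵀ Ĝ Ωⱼ)⁻¹ Ωⱼᵀ` equals `𝛀 D 𝛀ᵀ`, where `D` is block
diagonal with blocks `pⱼ (Ωⱼᵀ Ĝ Ωⱼ)⁻¹`. Each block is positive definite, since
`Ωⱼᵀ Ĝ Ωⱼ = (A Ωⱼ)ᵀ G (A Ωⱼ)` and `A Ωⱼ` is injective; so `D` is positive definite, and a congruence
by a matrix of full row rank preserves positive definiteness.
-/

section BlockDiagonal

variable {ι R : Type*} {l k : ι → Type*} [DecidableEq ι]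

theorem blockDiagonal'_mulVec_apply [NonUnitalNonAssocSemiring R] [Fintype ι] [∀ j, Fintype (k j)]
    (M : ∀ j, Matrix (l j) (k j) R) (x : (Σ j, k j) → R) (j : ι) (i : l j) :
    (blockDiagonal' M *ᵥ x) ⟨j, i⟩ = (M j *ᵥ fun a => x ⟨j, a⟩) i := by
  simp only [mulVec, dotProduct, Fintype.sum_sigma]
  rw [Fintype.sum_eq_single j fun j' hj' => ?_]
  · simp only [blockDiagonal'_apply_eq]
  · simp only [blockDiagonal'_apply_ne M _ _ hj'.symm, zero_mul, Finset.sum_const_zero]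

theorem dotProduct_blockDiagonal'_mulVec [NonUnitalNonAssocSemiring R] [Fintype ι]
    [∀ j, Fintype (l j)] [∀ j, Fintype (k j)] (M : ∀ j, Matrix (l j) (k j) R) (y : (Σ j, l j) → R)
    (x : (Σ j, k j) → R) :
    y ⬝ᵥ blockDiagonal' M *ᵥ x = ∑ j, (fun a => y ⟨j, a⟩) ⬝ᵥ M j *ᵥ fun a => x ⟨j, a⟩ := by
  simp only [dotProduct, Fintype.sum_sigma, blockDiagonal'_mulVec_apply]

theorem posDef_blockDiagonal' [Ring R] [PartialOrder R] [StarRing R] [IsOrderedAddMonoid R]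
    [Finite ι] [∀ j, Finite (l j)] {M : ∀ j, Matrix (l j) (l j) R} (hM : ∀ j, (M j).PosDef) :
    (blockDiagonal' M).PosDef := by
  have := Fintype.ofFinite ι
  have (j : ι) := Fintype.ofFinite (l j)
  refine .of_dotProduct_mulVec_pos
    (isHermitian_blockDiagonal'_iff.2 fun j => (hM j).isHermitian) fun x hx => ?_
  obtain ⟨⟨j, i⟩, hji⟩ := Function.ne_iff.1 hx
  rw [dotProduct_blockDiagonal'_mulVec]
  exact Finset.sum_pos' (fun j' _ => (hM j').posSemidef.dotProduct_mulVec_nonneg _)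
    ⟨j, Finset.mem_univ j, (hM j).dotProduct_mulVec_pos (Function.ne_iff.2 ⟨i, hji⟩)⟩

end BlockDiagonal

section ConcatCols

variable {ι n R : Type*} {l : ι → Type*}

/-- The concatenation `[Ω₁, …, Ω_s]` of a family of matrices with the same rows. Its columns are
indexed by the pairs of a block and a column of that block. -/
def concatCols (Ω : ∀ j, Matrix n (l j) R) : Matrix n (Σ j, l j) R :=
  of fun i q => Ω q.1 i q.2

variable [Fintype ι] [∀ j, Fintype (l j)]

theorem concatCols_mul_blockDiagonal' {k : ι → Type*} [NonUnitalNonAssocSemiring R]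
    [DecidableEq ι] (Ω : ∀ j, Matrix n (l j) R) (M : ∀ j, Matrix (l j) (k j) R) :
    concatCols Ω * blockDiagonal' M = concatCols fun j => Ω j * M j := by
  ext i ⟨j, a⟩
  simp only [concatCols, mul_apply, of_apply, Fintype.sum_sigma]
  rw [Fintype.sum_eq_single j fun j' hj' => ?_]
  · simp only [blockDiagonal'_apply_eq]
  · simp only [blockDiagonal'_apply_ne M _ _ hj', mul_zero, Finset.sum_const_zero]

theorem concatCols_mul_conjTranspose_concatCols {m : Type*} [NonUnitalNonAssocSemiring R]
    [Star R] (Φ : ∀ j, Matrix m (l j) R) (Ω : ∀ j, Matrix n (l j) R) :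
    concatCols Φ * (concatCols Ω)ᴴ = ∑ j, Φ j * (Ω j)ᴴ := by
  ext i i'
  simp only [concatCols, mul_apply, conjTranspose_apply, of_apply, Fintype.sum_sigma,
    Matrix.sum_apply]

theorem posDef_sum_mul_mul_conjTranspose [Fintype n] [Ring R] [PartialOrder R] [StarRing R]
    [IsOrderedAddMonoid R] {Ω : ∀ j, Matrix n (l j) R} {M : ∀ j, Matrix (l j) (l j) R}
    (hM : ∀ j, (M j).PosDef) (hΩ : Function.Injective (concatCols Ω).vecMul) :
    (∑ j, Ω j * M j * (Ω j)ᴴ).PosDef := by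
  classical
  rw [← concatCols_mul_conjTranspose_concatCols, ← concatCols_mul_blockDiagonal']
  exact (posDef_blockDiagonal' hM).mul_mul_conjTranspose_same hΩ

end ConcatCols

theorem stmt5_general {ι m n K : Type*} {l : ι → Type*} [Fintype ι] [Fintype m] [Fintype n]
    [∀ j, Fintype (l j)] [∀ j, DecidableEq (l j)] [Field K] [PartialOrder K] [StarRing K]
    [StarOrderedRing K] {A : Matrix m n K} {G : Matrix m m K} (hG : G.PosDef)
    {Ω : ∀ j, Matrix n (l j) K} (hAΩ : ∀ j, Function.Injective (A * Ω j).mulVec)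
    (hΩ : Function.Injective (concatCols Ω).vecMul) {p : ι → K} (hp : ∀ j, 0 < p j) :
    (∑ j, p j • (Ω j * ((Ω j)ᴴ * (Aᴴ * G * A) * Ω j)⁻¹ * (Ω j)ᴴ)).PosDef := by
  have posDef_compression (j : ι) : ((Ω j)ᴴ * (Aᴴ * G * A) * Ω j).PosDef := by
    simpa only [conjTranspose_mul, Matrix.mul_assoc] using
      hG.conjTranspose_mul_mul_same (hAΩ j)
  have posDef_weighted_inv (j : ι) : (p j • ((Ω j)ᴴ * (Aᴴ * G * A) * Ω j)⁻¹).PosDef :=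
    (posDef_compression j).inv.smul (hp j)
  simpa only [Matrix.mul_smul, Matrix.smul_mul] using
    posDef_sum_mul_mul_conjTranspose posDef_weighted_inv hΩ

/-- if `A` has full column rank, `G` is SPD, each `A Ωⱼ` has full
column rank and the concatenation `𝛀 = [Ω₁, …, Ω_s]` has full row rank, then
`E[W] = Σⱼ pⱼ Ωⱼ (Ωⱼᵀ Ĝ Ωⱼ)⁻¹ Ωⱼᵀ` is symmetric positive definite
(`Ĝ = Aᵀ G A`). -/
theorem stmt5 {m n s : ℕ}
    (A : Matrix (Fin m) (Fin n) ℝ) (hA : Function.Injective A.mulVec)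
    (G : Matrix (Fin m) (Fin m) ℝ) (hG : G.PosDef)
    (l : Fin s → ℕ) (Ω : ∀ j : Fin s, Matrix (Fin n) (Fin (l j)) ℝ)
    (hAΩ : ∀ j, Function.Injective (A * Ω j).mulVec)
    (hrow : Function.Injective fun x : Fin n → ℝ =>
      Matrix.vecMul x (Matrix.of fun i (q : Σ j : Fin s, Fin (l j)) => Ω q.1 i q.2))
    (p : Fin s → ℝ) (hp : ∀ j, 0 < p j) (hps : ∑ j, p j = 1) :
    (∑ j, p j • (Ω j * ((Ω j)ᵀ * (Aᵀ * G * A) * Ω j)⁻¹ * (Ω j)ᵀ)).PosDef := by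
  simpa only [conjTranspose_eq_transpose_of_trivial] using stmt5_general hG hAΩ hrow hp
end

section
/- Let A be a real m×n matrix, G an m×m real symmetric positive definite matrix, and Ω a nonzero real m×l matrix such that Ωᵀ A G Aᵀ Ω is invertible. Then Aᵀ Ω (Ωᵀ A G Aᵀ Ω)⁻¹ Ωᵀ A ⪰ (1/(λ_max(A G Aᵀ) · ‖Ωᵀ Ω‖₂)) · Aᵀ Ω Ωᵀ A in the Loewner order. -/
open Matrix
open scoped Matrix.Norms.L2Operator

/-
Let `H` stand for `A * G * Aᵀ`. The Loewner bounds `H ≤ λ_max(H) • 1` and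
`Ωᴴ * Ω ≤ ‖Ωᴴ * Ω‖ • 1` combine to `Ωᴴ * H * Ω ≤ c • 1` with `c = λ_max(H) ‖Ωᴴ * Ω‖`. Inversion
reverses this to `c⁻¹ • 1 ≤ (Ωᴴ * H * Ω)⁻¹`, and conjugating by `Ωᴴ * A` gives the claim.
-/

open scoped ComplexOrder MatrixOrder

theorem inv_smul_one_le_ringInverse {R : Type*} [PartialOrder R] [Ring R] [StarRing R]
    [TopologicalSpace R] [Algebra ℝ R] [StarOrderedRing R]
    [ContinuousFunctionalCalculus ℝ R IsSelfAdjoint] [NonnegSpectrumClass ℝ R]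
    {a : R} (ha : IsStrictlyPositive a) {c : ℝ} (hac : a ≤ c • (1 : R)) :
    c⁻¹ • (1 : R) ≤ Ring.inverse a := by
  obtain ⟨u, rfl⟩ := ha.isUnit
  have hu : IsSelfAdjoint (u : R) := .of_nonneg ha.nonneg
  rw [← Algebra.algebraMap_eq_smul_one, le_algebraMap_iff_spectrum_le hu] at hac
  rw [← Algebra.algebraMap_eq_smul_one, algebraMap_le_iff_le_spectrum hu.ringInverse,
    Ring.inverse_unit]
  intro x hx
  have hx_inv : x⁻¹ ∈ spectrum ℝ (u : R) := spectrum.inv₀_mem_iff.2 hx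
  have hx_ne : x ≠ 0 := spectrum.ne_zero_of_mem_of_unit hx
  have hx_pos : 0 < x⁻¹ :=
    (spectrum_nonneg_of_nonneg ha.nonneg hx_inv).lt_of_ne' (inv_ne_zero hx_ne)
  exact inv_le_of_inv_le₀ (inv_pos.1 hx_pos) (hac _ hx_inv)

section LoewnerOrder

variable {𝕜 m n : Type*} [RCLike 𝕜] [Fintype m]

theorem conjTranspose_mul_mul_mono [Finite n] {M N : Matrix m m 𝕜} (h : M ≤ N)
    (B : Matrix m n 𝕜) : Bᴴ * M * B ≤ Bᴴ * N * B := by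
  rw [Matrix.le_iff, ← Matrix.sub_mul, ← Matrix.mul_sub]
  exact h.conjTranspose_mul_mul_same B

variable [DecidableEq m]

theorem le_iSup_eigenvalues_smul_one {M : Matrix m m 𝕜} (hM : M.IsHermitian) :
    M ≤ (⨆ i, hM.eigenvalues i) • (1 : Matrix m m 𝕜) := by
  rw [← Algebra.algebraMap_eq_smul_one, le_algebraMap_iff_spectrum_le hM.isSelfAdjoint,
    hM.spectrum_real_eq_range_eigenvalues]
  rintro _ ⟨i, rfl⟩
  exact le_ciSup (Set.finite_range _).bddAbove i

theorem le_l2_opNorm_smul_one {M : Matrix m m 𝕜} (hM : M.IsHermitian) :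
    M ≤ ‖M‖ • (1 : Matrix m m 𝕜) := by
  obtain _ | _ := isEmpty_or_nonempty m
  · exact (Subsingleton.elim _ _).le
  rw [← Algebra.algebraMap_eq_smul_one, le_algebraMap_iff_spectrum_le hM.isSelfAdjoint]
  intro x hx
  have hx' : (x : 𝕜) ∈ spectrum 𝕜 M := spectrum.algebraMap_mem 𝕜 hx
  calc x
    _ ≤ ‖x‖ := Real.le_norm_self x
    _ = ‖(x : 𝕜)‖ := (RCLike.norm_ofReal x).symm
    _ ≤ ‖M‖ := spectrum.norm_le_norm_of_mem hx'

theorem conjTranspose_mul_mul_le_smul_one [Fintype n] [DecidableEq n] {H : Matrix m m 𝕜}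
    (hH : H.PosSemidef) (Ω : Matrix m n 𝕜) :
    Ωᴴ * H * Ω ≤ ((⨆ i, hH.isHermitian.eigenvalues i) * ‖Ωᴴ * Ω‖) • (1 : Matrix n n 𝕜) := by
  set μ := ⨆ i, hH.isHermitian.eigenvalues i
  have hμ : 0 ≤ μ := Real.iSup_nonneg hH.eigenvalues_nonneg
  calc Ωᴴ * H * Ω
    _ ≤ Ωᴴ * (μ • (1 : Matrix m m 𝕜)) * Ω :=
      conjTranspose_mul_mul_mono (le_iSup_eigenvalues_smul_one hH.isHermitian) Ω
    _ = μ • (Ωᴴ * Ω) := by simp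
    _ ≤ μ • ‖Ωᴴ * Ω‖ • (1 : Matrix n n 𝕜) :=
      smul_le_smul_of_nonneg_left
        (le_l2_opNorm_smul_one (isHermitian_conjTranspose_mul_self Ω)) hμ
    _ = (μ * ‖Ωᴴ * Ω‖) • (1 : Matrix n n 𝕜) := smul_smul _ _ _

theorem stmt12_general {l : Type*} [Finite n] [Fintype l] [DecidableEq l] (A : Matrix m n 𝕜)
    {H : Matrix m m 𝕜} (hH : H.PosSemidef) (Ω : Matrix m l 𝕜) (hinv : IsUnit (Ωᴴ * H * Ω)) :
    ((⨆ i, hH.isHermitian.eigenvalues i) * ‖Ωᴴ * Ω‖)⁻¹ • (Aᴴ * Ω * Ωᴴ * A) ≤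
      Aᴴ * Ω * (Ωᴴ * H * Ω)⁻¹ * Ωᴴ * A := by
  have hS : IsStrictlyPositive (Ωᴴ * H * Ω) :=
    hinv.isStrictlyPositive (hH.conjTranspose_mul_mul_same Ω).nonneg
  have hS_inv := inv_smul_one_le_ringInverse hS (conjTranspose_mul_mul_le_smul_one hH Ω)
  rw [← nonsing_inv_eq_ringInverse] at hS_inv
  simpa [Matrix.mul_assoc] using conjTranspose_mul_mul_mono hS_inv (Ωᴴ * A)

end LoewnerOrder

/-- for `A ∈ ℝ^{m×n}`, SPD `G` and nonzero `Ω` with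
`Ωᵀ A G Aᵀ Ω` invertible,
`Aᵀ Ω (Ωᵀ A G Aᵀ Ω)⁻¹ Ωᵀ A ⪰ (λ_max(A G Aᵀ) ‖Ωᵀ Ω‖₂)⁻¹ Aᵀ Ω Ωᵀ A`
in the Loewner order. -/
theorem stmt12 {m n l : ℕ} (A : Matrix (Fin m) (Fin n) ℝ)
    (G : Matrix (Fin n) (Fin n) ℝ) (hG : G.PosDef)
    (Ω : Matrix (Fin m) (Fin l) ℝ) (hΩ : Ω ≠ 0)
    (hinv : IsUnit (Ωᵀ * (A * G * Aᵀ) * Ω))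
    (hH : (A * G * Aᵀ).IsHermitian) :
    (Aᵀ * Ω * (Ωᵀ * (A * G * Aᵀ) * Ω)⁻¹ * Ωᵀ * A
      - ((⨆ i, hH.eigenvalues i) * ‖Ωᵀ * Ω‖)⁻¹ • (Aᵀ * Ω * Ωᵀ * A)).PosSemidef :=
  stmt12_general A (hG.posSemidef.mul_mul_conjTranspose_same A) Ω hinv
end

section
/- Let A be a real m×n matrix of full column rank, G an m×m real symmetric positive definite matrix, and Ω a random m×l real matrix with i.i.d. standard normal N(0,1) entries, where 1 ≤ l ≤ min{m,n}. Define T̂ = I_n − G^{1/2} Aᵀ Ω (Ωᵀ A G Aᵀ Ω)⁻¹ Ωᵀ A G^{1/2} (well-defined almost surely since Ωᵀ A G Aᵀ Ω is almost surely invertible). Then E[T̂] ⪯ I_n − (G^{1/2} Aᵀ A G^{1/2}) / (m · λ_max(A G Aᵀ)) in the Loewner order; in particular E[T̂] ≺ I_n (strictly). -/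
open Matrix MeasureTheory ProbabilityTheory
open scoped MatrixOrder

/-
Put `C = S Aᵀ`, so that `T̂ = 1 - P`, where `P` is the orthogonal projection onto the range of
`C Ω`. That range contains `C x` for each column `x` of `Ω`, hence
`C (x xᵀ / |x|²) Cᵀ ≤ λ_max(Cᵀ C) • P`. The law of `x` is invariant under permutations and sign
changes of the coordinates, so `E[x xᵀ / |x|²] = 1 / m`, and taking expectations bounds `E[P]`
from below by `C Cᵀ / (m λ_max)`. The only almost sure input is that `C Ω` has full column rank: a
suitable minor of `C Ω` is a nonzero polynomial in the entries of `Ω`, and the zero set of such a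
polynomial is null for any product of atomless laws.
-/

section NullSets

variable {ι κ τ : Type*}

theorem ae_eval_fin_ne_zero {d : ℕ} (ν : Fin d → Measure ℝ) [∀ i, SigmaFinite (ν i)]
    [∀ i, NullSingletonClass (ν i)] {p : MvPolynomial (Fin d) ℝ} (hp : p ≠ 0) :
    ∀ᵐ x ∂Measure.pi ν, MvPolynomial.eval x p ≠ 0 := by
  induction d with
  | zero =>
    refine .of_forall fun x hx => hp <| MvPolynomial.funext fun y => ?_
    rw [Subsingleton.elim y x, hx, map_zero]
  | succ d ih =>
    let q := MvPolynomial.finSuccEquiv ℝ d p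
    have hlead : q.leadingCoeff ≠ 0 := by simpa [q] using hp
    have hprod : ∀ᵐ z ∂(Measure.pi fun i : Fin d => ν i.succ).prod (ν 0),
        MvPolynomial.eval (Fin.cons z.2 z.1 : Fin (d + 1) → ℝ) p ≠ 0 := by
      refine (Measure.ae_prod_iff_ae_ae ?_).2 ?_
      · have hcont : Continuous fun z : (Fin d → ℝ) × ℝ => (Fin.cons z.2 z.1 : Fin (d + 1) → ℝ) :=
          Continuous.finCons (A := fun _ => ℝ) continuous_snd continuous_fst
        exact (measurableSet_singleton (0 : ℝ)).compl.preimage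
          ((MvPolynomial.continuous_eval p).comp hcont).measurable
      · filter_upwards [ih (fun i => ν i.succ) hlead] with s hs
        have hroots : q.map (MvPolynomial.eval s) ≠ 0 := fun h => hs <| by
          simpa using congrArg (fun r : Polynomial ℝ => r.coeff q.natDegree) h
        simp only [MvPolynomial.eval_eq_eval_mv_eval']
        exact measure_eq_zero_iff_ae_notMem.1
          ((Polynomial.finite_setOfPred_isRoot hroots).measure_zero (ν 0))
    have hpres := Measure.measurePreserving_swap.comp (measurePreserving_piFinSuccAbove ν 0)
    filter_upwards [hpres.quasiMeasurePreserving.ae hprod] with x hx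
    simpa using hx

theorem ae_eval_ne_zero [Fintype ι] (ν : ι → Measure ℝ) [∀ i, SigmaFinite (ν i)]
    [∀ i, NullSingletonClass (ν i)] {p : MvPolynomial ι ℝ} (hp : p ≠ 0) :
    ∀ᵐ x ∂Measure.pi ν, MvPolynomial.eval x p ≠ 0 := by
  let e := Fintype.equivFin ι
  have hpres := (measurePreserving_piCongrLeft ν e.symm).symm
  have hp' : MvPolynomial.rename e p ≠ 0 :=
    (map_ne_zero_iff _ (MvPolynomial.rename_injective e e.injective)).2 hp
  filter_upwards [hpres.quasiMeasurePreserving.ae (ae_eval_fin_ne_zero _ hp')] with x hx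
  rw [MvPolynomial.eval_rename] at hx
  convert hx
  ext i
  exact congrArg x (e.symm_apply_apply i).symm

theorem measurePreserving_uncurry [Fintype ι] [Fintype κ] (ν : ι → κ → Measure ℝ)
    [∀ i j, IsProbabilityMeasure (ν i j)] :
    MeasurePreserving (fun (Ω : ι → κ → ℝ) (p : ι × κ) => Ω p.1 p.2)
      (Measure.pi fun i => Measure.pi (ν i)) (Measure.pi fun p : ι × κ => ν p.1 p.2) := by
  refine ⟨by fun_prop, ?_⟩
  have h := Measure.infinitePi_map_curry_symm ν
  simp only [Measure.infinitePi_eq_pi] at h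
  exact h

theorem eval_det_map_C_mul_mvPolynomialX {R : Type*} [CommRing R] [Fintype ι] [Fintype κ]
    [DecidableEq κ] (K : Matrix κ ι R) (s : ι × κ → R) :
    MvPolynomial.eval s (K.map (MvPolynomial.C : R →+* MvPolynomial (ι × κ) R) *
      mvPolynomialX ι κ R : Matrix κ κ (MvPolynomial (ι × κ) R)).det =
      (K * of fun i j => s (i, j)).det := by
  rw [RingHom.map_det]
  congr 1
  ext i j
  simp [mul_apply]

theorem ae_det_mul_ne_zero [Fintype ι] [Fintype κ] [DecidableEq κ] (ν : ι → κ → Measure ℝ)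
    [∀ i j, IsProbabilityMeasure (ν i j)] [∀ i j, NullSingletonClass (ν i j)]
    {K : Matrix κ ι ℝ} {E : Matrix ι κ ℝ} (hKE : K * E = 1) :
    ∀ᵐ Ω ∂Measure.pi fun i => Measure.pi (ν i), (K * of Ω).det ≠ 0 := by
  have hp : (K.map (MvPolynomial.C : ℝ →+* MvPolynomial (ι × κ) ℝ) *
      mvPolynomialX ι κ ℝ : Matrix κ κ (MvPolynomial (ι × κ) ℝ)).det ≠ 0 := fun h => by
    have hE : MvPolynomial.eval (fun p : ι × κ => E p.1 p.2) _ = (K * E).det :=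
      eval_det_map_C_mul_mvPolynomialX K _
    rw [h, map_zero, hKE, det_one] at hE
    exact zero_ne_one hE
  filter_upwards [(measurePreserving_uncurry ν).quasiMeasurePreserving.ae
    (ae_eval_ne_zero _ hp)] with Ω hΩ
  rwa [eval_det_map_C_mul_mvPolynomialX] at hΩ

theorem ae_injective_mulVec_mul [Fintype ι] [Fintype κ] [Fintype τ] (ν : ι → κ → Measure ℝ)
    [∀ i j, IsProbabilityMeasure (ν i j)] [∀ i j, NullSingletonClass (ν i j)]
    {C : Matrix τ ι ℝ} (hC : Function.Surjective C.mulVec)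
    (hcard : Fintype.card κ ≤ Fintype.card τ) :
    ∀ᵐ Ω ∂Measure.pi fun i => Measure.pi (ν i), Function.Injective (C * of Ω).mulVec := by
  classical
  obtain ⟨D, hD⟩ := mulVec_surjective_iff_exists_right_inverse.1 hC
  obtain ⟨f⟩ := Function.Embedding.nonempty_of_card_le hcard
  have hKE : C.submatrix f id * D.submatrix id f = 1 := by
    rw [← submatrix_mul _ _ _ _ _ Function.bijective_id, hD, submatrix_one f f.injective]
  filter_upwards [ae_det_mul_ne_zero ν hKE] with Ω hΩ
  have hinj : Function.Injective ((C * of Ω).submatrix f id).mulVec :=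
    mulVec_injective_of_isUnit ((isUnit_iff_isUnit_det _).2 hΩ.isUnit)
  exact fun x y hxy => hinj (funext fun i => congrFun hxy (f i))

end NullSets

section Projections

variable {ι κ : Type*} [Fintype ι]

theorem sq_apply_le_transpose_mul_self_apply (C : Matrix ι κ ℝ) (i : ι) (j : κ) :
    C i j ^ 2 ≤ (Cᵀ * C) j j := calc
  C i j ^ 2 ≤ ∑ k, C k j ^ 2 :=
    Finset.single_le_sum (f := fun k => C k j ^ 2) (fun _ _ => sq_nonneg _) (Finset.mem_univ i)
  _ = (Cᵀ * C) j j := by simp [mul_apply, sq]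

theorem abs_apply_le_one_of_isStarProjection {P : Matrix ι ι ℝ} (hP : IsStarProjection P)
    (i j : ι) : |P i j| ≤ 1 := by
  classical
  have hPP : Pᵀ * P = P := by
    rw [← conjTranspose_eq_transpose_of_trivial, ← star_eq_conjTranspose, hP.isSelfAdjoint,
      hP.isIdempotentElem]
  have hdiag : P j j ≤ 1 := by simpa using (le_iff.1 hP.le_one).diag_nonneg (i := j)
  have hsq : P i j ^ 2 ≤ P j j := calc
    P i j ^ 2 ≤ (Pᵀ * P) j j := sq_apply_le_transpose_mul_self_apply P i j
    _ = P j j := by rw [hPP]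
  exact (sq_le_one_iff_abs_le_one _).1 (hsq.trans hdiag)

theorem dotProduct_mulVec_self_le [Fintype κ] [DecidableEq κ] {C : Matrix ι κ ℝ} {r : ℝ}
    (hC : Cᵀ * C ≤ r • (1 : Matrix κ κ ℝ)) (x : κ → ℝ) :
    (C *ᵥ x) ⬝ᵥ (C *ᵥ x) ≤ r * (x ⬝ᵥ x) := by
  have h := (le_iff.1 hC).dotProduct_mulVec_nonneg x
  rw [star_trivial, sub_mulVec, dotProduct_sub, smul_mulVec, one_mulVec, dotProduct_smul,
    ← mulVec_mulVec, dotProduct_mulVec x Cᵀ, vecMul_transpose, smul_eq_mul] at h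
  exact sub_nonneg.1 h

theorem le_iSup_eigenvalues_smul_one_s14 [DecidableEq ι] {B : Matrix ι ι ℝ} (hB : B.IsHermitian) :
    B ≤ (⨆ i, hB.eigenvalues i) • (1 : Matrix ι ι ℝ) := by
  rw [← Algebra.algebraMap_eq_smul_one]
  refine le_algebraMap_of_spectrum_le (ha := hB.isSelfAdjoint) fun t ht => ?_
  obtain ⟨i, rfl⟩ := hB.spectrum_real_eq_range_eigenvalues ▸ ht
  exact le_ciSup (Set.finite_range _).bddAbove i

/-- The orthogonal projection onto the line spanned by `x`; it is `0` for `x = 0`, because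
`0⁻¹ = 0`. -/
noncomputable def lineProj (x : ι → ℝ) : Matrix ι ι ℝ := (x ⬝ᵥ x)⁻¹ • vecMulVec x x

theorem lineProj_apply (x : ι → ℝ) (i j : ι) : lineProj x i j = (x ⬝ᵥ x)⁻¹ * (x i * x j) := rfl

theorem isStarProjection_lineProj (x : ι → ℝ) : IsStarProjection (lineProj x) where
  isIdempotentElem := by
    rcases eq_or_ne x 0 with rfl | hx
    · simp [lineProj, IsIdempotentElem]
    · have hxx : x ⬝ᵥ x ≠ 0 := dotProduct_self_eq_zero.not.2 hx
      simp [IsIdempotentElem, lineProj, vecMulVec_mul_vecMulVec, smul_smul, hxx, vecMulVec_smul]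
  isSelfAdjoint := by
    simp [IsSelfAdjoint, lineProj, star_eq_conjTranspose]

theorem trace_lineProj {x : ι → ℝ} (hx : x ≠ 0) : (lineProj x).trace = 1 := by
  rw [lineProj, trace_smul, trace_vecMulVec, smul_eq_mul,
    inv_mul_cancel₀ (dotProduct_self_eq_zero.not.2 hx)]

theorem lineProj_comp_perm (e : Equiv.Perm ι) (x : ι → ℝ) :
    lineProj (x ∘ e) = (lineProj x).submatrix e e := by
  ext i j
  simp [lineProj_apply, comp_equiv_dotProduct_comp_equiv]

theorem lineProj_update_neg_apply [DecidableEq ι] (x : ι → ℝ) {i j : ι} (hij : i ≠ j) :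
    lineProj (Function.update x i (-x i)) i j = -lineProj x i j := by
  have hdot : Function.update x i (-x i) ⬝ᵥ Function.update x i (-x i) = x ⬝ᵥ x :=
    Finset.sum_congr rfl fun k _ => by
      rcases eq_or_ne k i with rfl | hk <;> simp [*]
  simp [lineProj_apply, hdot, hij.symm]

theorem measurable_lineProj_apply (i j : ι) : Measurable fun x : ι → ℝ => lineProj x i j := by
  simp only [lineProj_apply, dotProduct]
  fun_prop

theorem mul_lineProj_mul_transpose_le [Fintype κ] [DecidableEq κ] {C : Matrix ι κ ℝ} {r : ℝ}
    (hC : Cᵀ * C ≤ r • (1 : Matrix κ κ ℝ)) (x : κ → ℝ) :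
    C * lineProj x * Cᵀ ≤ r • lineProj (C *ᵥ x) := by
  set y := C *ᵥ x with hy
  have hconj : C * lineProj x * Cᵀ = (x ⬝ᵥ x)⁻¹ • vecMulVec y y := by
    rw [lineProj, Matrix.mul_smul, Matrix.smul_mul, mul_vecMulVec, vecMulVec_mul, vecMul_transpose]
  rw [hconj, lineProj, smul_smul]
  rcases eq_or_ne y 0 with h0 | h0
  · simp [h0]
  have hx0 : x ≠ 0 := fun h => h0 (by rw [hy, h, mulVec_zero])
  have hxx : 0 < x ⬝ᵥ x := by simpa using dotProduct_star_self_pos_iff.2 hx0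
  have hyy : 0 < y ⬝ᵥ y := by simpa using dotProduct_star_self_pos_iff.2 h0
  have hcoef : (x ⬝ᵥ x)⁻¹ ≤ r * (y ⬝ᵥ y)⁻¹ := by
    rw [← div_eq_mul_inv, inv_le_iff_one_le_mul₀ hxx, div_mul_eq_mul_div, one_le_div hyy]
    exact dotProduct_mulVec_self_le hC x
  rw [le_iff, ← sub_smul]
  exact (posSemidef_vecMulVec_self_star y).smul (sub_nonneg.2 hcoef)

variable [Fintype κ] [DecidableEq κ]

/-- The orthogonal projection onto the column space of `Y`, for `Y` of full column rank; it is `0`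
for all other `Y`, because the inverse of a singular matrix is `0`. -/
noncomputable def colProj (Y : Matrix ι κ ℝ) : Matrix ι ι ℝ := Y * (Yᵀ * Y)⁻¹ * Yᵀ

theorem isStarProjection_colProj (Y : Matrix ι κ ℝ) : IsStarProjection (colProj Y) where
  isIdempotentElem := by
    by_cases h : IsUnit (Yᵀ * Y).det
    · calc
        colProj Y * colProj Y = Y * ((Yᵀ * Y)⁻¹ * (Yᵀ * Y)) * (Yᵀ * Y)⁻¹ * Yᵀ := by
          simp only [colProj, Matrix.mul_assoc]
        _ = colProj Y := by rw [nonsing_inv_mul _ h, Matrix.mul_one, colProj]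
    · simp [IsIdempotentElem, colProj, nonsing_inv_apply_not_isUnit _ h]
  isSelfAdjoint := by
    simp [IsSelfAdjoint, colProj, star_eq_conjTranspose, transpose_nonsing_inv, Matrix.mul_assoc]

theorem colProj_mul_self {Y : Matrix ι κ ℝ} (hY : Function.Injective Y.mulVec) :
    colProj Y * Y = Y := by
  have hunit : IsUnit (Yᵀ * Y) := (PosDef.conjTranspose_mul_self Y hY).isUnit
  rw [colProj, Matrix.mul_assoc, Matrix.mul_assoc,
    nonsing_inv_mul _ ((isUnit_iff_isUnit_det _).1 hunit), Matrix.mul_one]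

theorem lineProj_mulVec_le_colProj {Y : Matrix ι κ ℝ} (hY : Function.Injective Y.mulVec)
    (w : κ → ℝ) : lineProj (Y *ᵥ w) ≤ colProj Y := by
  refine (isStarProjection_lineProj _).le_of_mul_eq_right (isStarProjection_colProj Y) ?_
  rw [lineProj, Matrix.mul_smul, mul_vecMulVec, mulVec_mulVec, colProj_mul_self hY]

theorem mul_lineProj_col_mul_transpose_le {τ : Type*} [Fintype τ] [DecidableEq ι]
    {C : Matrix τ ι ℝ} {r : ℝ} (hr : 0 ≤ r) (hC : Cᵀ * C ≤ r • (1 : Matrix ι ι ℝ))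
    {Y : Matrix ι κ ℝ} (hY : Function.Injective (C * Y).mulVec) (c : κ) :
    C * lineProj (Y.col c) * Cᵀ ≤ r • colProj (C * Y) := calc
  C * lineProj (Y.col c) * Cᵀ ≤ r • lineProj (C *ᵥ Y.col c) := mul_lineProj_mul_transpose_le hC _
  _ = r • lineProj ((C * Y) *ᵥ Pi.single c 1) := by rw [← mulVec_mulVec, mulVec_single_one]
  _ ≤ r • colProj (C * Y) := smul_le_smul_of_nonneg_left (lineProj_mulVec_le_colProj hY _) hr

theorem measurable_colProj_apply {α : Type*} [TopologicalSpace α] [MeasurableSpace α]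
    [OpensMeasurableSpace α] {Y : α → Matrix ι κ ℝ} (hY : Continuous Y) (i j : ι) :
    Measurable fun ω => colProj (Y ω) i j := by
  have hgram := hY.matrix_transpose.matrix_mul hY
  have hadj := (hY.matrix_mul hgram.matrix_adjugate).matrix_mul hY.matrix_transpose
  convert hgram.matrix_det.measurable.inv.mul (hadj.matrix_elem i j).measurable using 2 with ω
  simp [colProj, Matrix.inv_def]

end Projections

section EntrywiseIntegral

variable {α ι κ : Type*} [MeasurableSpace α] {μ : Measure α}

/-- The expectation of a random matrix. It is taken entry by entry since `Matrix` carries no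
canonical norm, so the Bochner integral of a matrix-valued function is not available. -/
noncomputable def entrywiseIntegral (μ : Measure α) (X : α → Matrix ι κ ℝ) : Matrix ι κ ℝ :=
  of fun i j => ∫ ω, X ω i j ∂μ

theorem entrywiseIntegral_sub {X Y : α → Matrix ι κ ℝ}
    (hX : ∀ i j, Integrable (fun ω => X ω i j) μ) (hY : ∀ i j, Integrable (fun ω => Y ω i j) μ) :
    entrywiseIntegral μ (fun ω => X ω - Y ω) = entrywiseIntegral μ X - entrywiseIntegral μ Y := by
  ext i j
  exact integral_sub (hX i j) (hY i j)

theorem entrywiseIntegral_smul (r : ℝ) (X : α → Matrix ι κ ℝ) :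
    entrywiseIntegral μ (fun ω => r • X ω) = r • entrywiseIntegral μ X := by
  ext i j
  exact integral_const_mul r _

theorem entrywiseIntegral_const_sub [IsProbabilityMeasure μ] (B : Matrix ι κ ℝ)
    {X : α → Matrix ι κ ℝ} (hX : ∀ i j, Integrable (fun ω => X ω i j) μ) :
    entrywiseIntegral μ (fun ω => B - X ω) = B - entrywiseIntegral μ X := by
  ext i j
  simp [entrywiseIntegral, integral_sub (integrable_const _) (hX i j)]

theorem entrywiseIntegral_comp {β : Type*} [MeasurableSpace β] {ν : Measure β} {f : α → β}
    (hf : MeasurePreserving f μ ν) {X : β → Matrix ι κ ℝ}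
    (hX : ∀ i j, Measurable fun ω => X ω i j) :
    entrywiseIntegral μ (fun ω => X (f ω)) = entrywiseIntegral ν X := by
  ext i j
  rw [entrywiseIntegral, entrywiseIntegral, ← hf.map_eq, of_apply, of_apply,
    integral_map hf.aemeasurable (hX i j).aestronglyMeasurable]

theorem dotProduct_entrywiseIntegral_mulVec [Fintype ι] [Fintype κ] {X : α → Matrix ι κ ℝ}
    (hX : ∀ i j, Integrable (fun ω => X ω i j) μ) (x : ι → ℝ) (y : κ → ℝ) :
    x ⬝ᵥ entrywiseIntegral μ X *ᵥ y = ∫ ω, x ⬝ᵥ X ω *ᵥ y ∂μ := by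
  simp only [dotProduct, mulVec, entrywiseIntegral, of_apply]
  rw [integral_finsetSum _ fun i _ => (integrable_finsetSum _ fun j _ =>
    (hX i j).mul_const (y j)).const_mul (x i)]
  refine Finset.sum_congr rfl fun i _ => ?_
  rw [integral_const_mul, integral_finsetSum _ fun j _ => (hX i j).mul_const (y j)]
  simp only [integral_mul_const]

theorem integrable_mul_mul_apply [Fintype ι] [Fintype κ] {τ σ : Type*} {X : α → Matrix ι κ ℝ}
    (hX : ∀ i j, Integrable (fun ω => X ω i j) μ) (B : Matrix τ ι ℝ) (D : Matrix κ σ ℝ)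
    (i : τ) (j : σ) : Integrable (fun ω => (B * X ω * D) i j) μ := by
  simp only [mul_apply]
  exact integrable_finsetSum _ fun k _ =>
    (integrable_finsetSum _ fun l _ => (hX l k).const_mul (B i l)).mul_const (D k j)

theorem mul_entrywiseIntegral_mul [Fintype ι] [Fintype κ] {τ σ : Type*} {X : α → Matrix ι κ ℝ}
    (hX : ∀ i j, Integrable (fun ω => X ω i j) μ) (B : Matrix τ ι ℝ) (D : Matrix κ σ ℝ) :
    B * entrywiseIntegral μ X * D = entrywiseIntegral μ fun ω => B * X ω * D := by
  ext i j
  simp only [Matrix.mul_assoc]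
  exact dotProduct_entrywiseIntegral_mulVec hX (B i) (fun k => D k j)

theorem posSemidef_entrywiseIntegral [Finite ι] {X : α → Matrix ι ι ℝ}
    (hX : ∀ i j, Integrable (fun ω => X ω i j) μ) (hpos : ∀ᵐ ω ∂μ, (X ω).PosSemidef) :
    (entrywiseIntegral μ X).PosSemidef := by
  cases nonempty_fintype ι
  refine .of_dotProduct_mulVec_nonneg ?_ fun v => ?_
  · ext i j
    refine integral_congr_ae ?_
    filter_upwards [hpos] with ω hω
    exact hω.isHermitian.apply i j
  · rw [dotProduct_entrywiseIntegral_mulVec hX]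
    refine integral_nonneg_of_ae ?_
    filter_upwards [hpos] with ω hω
    exact hω.dotProduct_mulVec_nonneg v

theorem entrywiseIntegral_mono [Finite ι] {X Y : α → Matrix ι ι ℝ}
    (hX : ∀ i j, Integrable (fun ω => X ω i j) μ) (hY : ∀ i j, Integrable (fun ω => Y ω i j) μ)
    (hXY : ∀ᵐ ω ∂μ, X ω ≤ Y ω) : entrywiseIntegral μ X ≤ entrywiseIntegral μ Y := by
  rw [le_iff, ← entrywiseIntegral_sub hY hX]
  exact posSemidef_entrywiseIntegral (fun i j => (hY i j).sub (hX i j)) hXY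

theorem integrable_apply_of_isStarProjection [Fintype ι] [IsFiniteMeasure μ]
    {P : α → Matrix ι ι ℝ} (hP : ∀ ω, IsStarProjection (P ω))
    (hmeas : ∀ i j, Measurable fun ω => P ω i j) (i j : ι) :
    Integrable (fun ω => P ω i j) μ :=
  .of_bound (hmeas i j).aestronglyMeasurable 1 <|
    .of_forall fun ω => abs_apply_le_one_of_isStarProjection (hP ω) i j

end EntrywiseIntegral

section SymmetricLaw

variable {ι κ τ : Type*} [Fintype ι] (ν : Measure ℝ) [IsProbabilityMeasure ν]

theorem measurePreserving_comp_perm (e : Equiv.Perm ι) :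
    MeasurePreserving (fun x : ι → ℝ => x ∘ e) (Measure.pi fun _ => ν) (Measure.pi fun _ => ν) :=
  (measurePreserving_piCongrLeft (fun _ => ν) e).symm

theorem measurePreserving_update_neg [DecidableEq ι] [ν.IsNegInvariant] (i : ι) :
    MeasurePreserving (fun x : ι → ℝ => Function.update x i (-x i))
      (Measure.pi fun _ => ν) (Measure.pi fun _ => ν) := by
  have h := measurePreserving_pi (fun _ : ι => ν) (fun _ : ι => ν)
    (f := Function.update (fun _ => id) i Neg.neg) fun k => by
      rcases eq_or_ne k i with rfl | hk
      · simpa using Measure.measurePreserving_neg ν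
      · simpa [hk] using MeasurePreserving.id ν
  convert h using 2 with x
  ext k
  rcases eq_or_ne k i with rfl | hk <;> simp [*]

theorem measurePreserving_col [Fintype κ] (c : κ) :
    MeasurePreserving (fun Ω : ι → κ → ℝ => (of Ω).col c)
      (Measure.pi fun _ => Measure.pi fun _ => ν) (Measure.pi fun _ => ν) :=
  measurePreserving_pi _ _ fun _ => measurePreserving_eval (fun _ : κ => ν) c

theorem trace_entrywiseIntegral_lineProj [Nonempty ι] [NullSingletonClass ν] :
    (entrywiseIntegral (Measure.pi fun _ : ι => ν) lineProj).trace = 1 := by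
  have hne : ∀ᵐ x ∂Measure.pi fun _ : ι => ν, x ≠ 0 := by
    have i := Classical.arbitrary ι
    filter_upwards [Measure.ae_eval_ne (μ := fun _ : ι => ν) i 0] with x hx h
    exact hx (congrFun h i)
  calc
    (entrywiseIntegral (Measure.pi fun _ : ι => ν) lineProj).trace
        = ∫ x, (lineProj x).trace ∂Measure.pi fun _ : ι => ν :=
      .symm <| integral_finsetSum _ fun i _ => integrable_apply_of_isStarProjection
        isStarProjection_lineProj measurable_lineProj_apply i i
    _ = ∫ _, 1 ∂Measure.pi fun _ : ι => ν :=
      integral_congr_ae (hne.mono fun x hx => trace_lineProj hx)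
    _ = 1 := by simp

theorem entrywiseIntegral_lineProj [DecidableEq ι] [NullSingletonClass ν] [ν.IsNegInvariant] :
    entrywiseIntegral (Measure.pi fun _ : ι => ν) lineProj =
      (Fintype.card ι : ℝ)⁻¹ • (1 : Matrix ι ι ℝ) := by
  set E := entrywiseIntegral (Measure.pi fun _ : ι => ν) lineProj with hE
  have hdiag (i j : ι) : E j j = E i i := by
    have h := congrFun₂ (entrywiseIntegral_comp
      (measurePreserving_comp_perm ν (Equiv.swap i j)) measurable_lineProj_apply) i i
    simpa [lineProj_comp_perm, entrywiseIntegral, E] using h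
  have hoff {i j : ι} (hij : i ≠ j) : E i j = 0 := by
    have h := congrFun₂ (entrywiseIntegral_comp
      (measurePreserving_update_neg ν i) measurable_lineProj_apply) i j
    simp only [entrywiseIntegral, lineProj_update_neg_apply _ hij, integral_neg, of_apply] at h
    exact self_eq_neg.1 h.symm
  ext i j
  rcases eq_or_ne i j with rfl | hij
  · have : Nonempty ι := ⟨i⟩
    have htrace : Fintype.card ι * E i i = 1 := by
      rw [← trace_entrywiseIntegral_lineProj (ι := ι) ν, ← hE]
      simp [trace, hdiag i]
    simpa using eq_inv_of_mul_eq_one_right htrace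
  · simp [hoff hij, hij]

variable [Fintype κ] [DecidableEq κ]

theorem integrable_colProj_mul_apply [Fintype τ] (C : Matrix τ ι ℝ) (i j : τ) :
    Integrable (fun Ω : ι → κ → ℝ => colProj (C * of Ω) i j)
      (Measure.pi fun _ => Measure.pi fun _ => ν) :=
  integrable_apply_of_isStarProjection (fun _ => isStarProjection_colProj _)
    (measurable_colProj_apply (continuous_const.matrix_mul (continuous_id (X := ι → κ → ℝ)))) i j

theorem inv_card_smul_mul_transpose_le [Fintype τ] [DecidableEq ι] [NullSingletonClass ν]
    [ν.IsNegInvariant] [Nonempty κ] (hcard : Fintype.card κ ≤ Fintype.card τ) {C : Matrix τ ι ℝ}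
    (hC : Function.Surjective C.mulVec) {r : ℝ} (hr : 0 ≤ r)
    (hCr : Cᵀ * C ≤ r • (1 : Matrix ι ι ℝ)) :
    (Fintype.card ι : ℝ)⁻¹ • (C * Cᵀ) ≤
      r • entrywiseIntegral (Measure.pi fun _ : ι => Measure.pi fun _ : κ => ν)
        fun Ω => colProj (C * of Ω) := by
  set μ := Measure.pi fun _ : ι => Measure.pi fun _ : κ => ν
  have c := Classical.arbitrary κ
  have hcol := measurePreserving_col (ι := ι) ν c
  have hint (i j : ι) : Integrable (fun Ω : ι → κ → ℝ => lineProj ((of Ω).col c) i j) μ :=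
    integrable_apply_of_isStarProjection (fun _ => isStarProjection_lineProj _)
      (fun i j => (measurable_lineProj_apply i j).comp hcol.measurable) i j
  calc
    (Fintype.card ι : ℝ)⁻¹ • (C * Cᵀ)
        = C * entrywiseIntegral μ (fun Ω => lineProj ((of Ω).col c)) * Cᵀ := by
      rw [entrywiseIntegral_comp hcol measurable_lineProj_apply, entrywiseIntegral_lineProj,
        Matrix.mul_smul, Matrix.smul_mul, Matrix.mul_one]
    _ = entrywiseIntegral μ fun Ω => C * lineProj ((of Ω).col c) * Cᵀ :=
      mul_entrywiseIntegral_mul hint C Cᵀ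
    _ ≤ entrywiseIntegral μ fun Ω => r • colProj (C * of Ω) := by
      refine entrywiseIntegral_mono (integrable_mul_mul_apply hint C Cᵀ)
        (fun i j => (integrable_colProj_mul_apply ν C i j).const_mul r) ?_
      filter_upwards [ae_injective_mulVec_mul (fun _ _ => ν) hC hcard] with Ω hΩ
      exact mul_lineProj_col_mul_transpose_le hr hCr hΩ c
    _ = r • entrywiseIntegral μ fun Ω => colProj (C * of Ω) := entrywiseIntegral_smul r _

end SymmetricLaw

section PosDef

variable {ι κ τ : Type*} [Fintype ι]

theorem card_mul_pos_of_transpose_mul_le [Fintype τ] [DecidableEq ι] {C : Matrix τ ι ℝ}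
    (hC : C ≠ 0) {r : ℝ} (hCr : Cᵀ * C ≤ r • (1 : Matrix ι ι ℝ)) : 0 < Fintype.card ι * r := by
  obtain ⟨i, j, hij⟩ : ∃ i j, C i j ≠ 0 := by
    by_contra! h
    exact hC (ext h)
  have : Nonempty ι := ⟨j⟩
  refine mul_pos (Nat.cast_pos.2 Fintype.card_pos) ?_
  calc
    0 < C i j ^ 2 := sq_pos_of_ne_zero hij
    _ ≤ (Cᵀ * C) j j := sq_apply_le_transpose_mul_self_apply C i j
    _ ≤ r := by simpa using (le_iff.1 hCr).diag_nonneg (i := j)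

theorem ne_zero_of_posDef_mul_transpose [Nonempty τ] {C : Matrix τ ι ℝ} (hC : (C * Cᵀ).PosDef) :
    C ≠ 0 := by
  rintro rfl
  simpa using hC.diag_pos (i := Classical.arbitrary τ)

theorem mulVec_surjective_of_posDef_mul_transpose [Finite τ] {C : Matrix τ ι ℝ}
    (hC : (C * Cᵀ).PosDef) : Function.Surjective C.mulVec := by
  classical
  cases nonempty_fintype τ
  refine mulVec_surjective_iff_exists_right_inverse.2 ⟨Cᵀ * (C * Cᵀ)⁻¹, ?_⟩
  rw [← Matrix.mul_assoc, mul_nonsing_inv _ ((isUnit_iff_isUnit_det _).1 hC.isUnit)]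

variable [Fintype τ] [Fintype κ] [DecidableEq κ] [Nonempty κ] (ν : Measure ℝ)
  [IsProbabilityMeasure ν] [NullSingletonClass ν] [ν.IsNegInvariant]

theorem inv_card_mul_smul_mul_transpose_le_of_posDef [DecidableEq ι]
    (hcard : Fintype.card κ ≤ Fintype.card τ) {C : Matrix τ ι ℝ} (hC : (C * Cᵀ).PosDef)
    {r : ℝ} (hCr : Cᵀ * C ≤ r • (1 : Matrix ι ι ℝ)) :
    (Fintype.card ι * r)⁻¹ • (C * Cᵀ) ≤
      entrywiseIntegral (Measure.pi fun _ : ι => Measure.pi fun _ : κ => ν)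
        fun Ω => colProj (C * of Ω) := by
  have : Nonempty τ := Fintype.card_pos_iff.1 (Fintype.card_pos.trans_le hcard)
  have hpos := card_mul_pos_of_transpose_mul_le (ne_zero_of_posDef_mul_transpose hC) hCr
  have hr : 0 < r := pos_of_mul_pos_right hpos (Nat.cast_nonneg _)
  rw [_root_.mul_inv_rev, mul_smul, inv_smul_le_iff_of_pos hr]
  exact inv_card_smul_mul_transpose_le ν hcard (mulVec_surjective_of_posDef_mul_transpose hC)
    hr.le hCr

theorem posDef_entrywiseIntegral_colProj (hcard : Fintype.card κ ≤ Fintype.card τ)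
    {C : Matrix τ ι ℝ} (hC : (C * Cᵀ).PosDef) :
    (entrywiseIntegral (Measure.pi fun _ : ι => Measure.pi fun _ : κ => ν)
      fun Ω => colProj (C * of Ω)).PosDef := by
  classical
  have : Nonempty τ := Fintype.card_pos_iff.1 (Fintype.card_pos.trans_le hcard)
  have hCr := le_iSup_eigenvalues_smul_one_s14 (isHermitian_conjTranspose_mul_self C)
  have hpos := card_mul_pos_of_transpose_mul_le (ne_zero_of_posDef_mul_transpose hC) hCr
  have hle := inv_card_mul_smul_mul_transpose_le_of_posDef ν hcard hC hCr
  simpa using (hC.smul (inv_pos.2 hpos)).add_posSemidef (le_iff.1 hle)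

end PosDef

section Sqrt

variable {ι n : Type*} [Fintype n] [DecidableEq n]

theorem transpose_sqrt (G : Matrix n n ℝ) : (CFC.sqrt G)ᵀ = CFC.sqrt G := by
  simpa using (nonneg_iff_posSemidef.1 (CFC.sqrt_nonneg G)).isHermitian.eq

theorem transpose_sqrt_mul_transpose (G : Matrix n n ℝ) (A : Matrix ι n ℝ) :
    (CFC.sqrt G * Aᵀ)ᵀ = A * CFC.sqrt G := by
  rw [transpose_mul, transpose_sqrt, transpose_transpose]

theorem transpose_mul_sqrt_mul_transpose_mul {G : Matrix n n ℝ} (hG : G.PosSemidef)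
    (A : Matrix ι n ℝ) :
    (CFC.sqrt G * Aᵀ)ᵀ * (CFC.sqrt G * Aᵀ) = A * G * Aᵀ := by
  rw [transpose_sqrt_mul_transpose, Matrix.mul_assoc,
    ← Matrix.mul_assoc _ _ Aᵀ, CFC.sqrt_mul_sqrt_self G hG.nonneg, Matrix.mul_assoc]

theorem posDef_sqrt_mul_transpose_mul_mul_sqrt [Fintype ι] {G : Matrix n n ℝ}
    (hG : G.PosDef) {A : Matrix ι n ℝ} (hA : Function.Injective A.mulVec) :
    (CFC.sqrt G * Aᵀ * A * CFC.sqrt G).PosDef := by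
  have hAA : (Aᵀ * A).PosDef := .conjTranspose_mul_self A hA
  have hS : IsUnit (CFC.sqrt G) := (CFC.isUnit_sqrt_iff G hG.posSemidef.nonneg).2 hG.isUnit
  have h := hAA.conjTranspose_mul_mul_same (mulVec_injective_of_isUnit hS)
  rwa [conjTranspose_eq_transpose_of_trivial, transpose_sqrt, ← Matrix.mul_assoc] at h

theorem colProj_sqrt_mul_transpose_mul [Fintype ι] {κ : Type*} [Fintype κ] [DecidableEq κ]
    {G : Matrix n n ℝ} (hG : G.PosSemidef) (A : Matrix ι n ℝ) (Y : Matrix ι κ ℝ) :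
    colProj (CFC.sqrt G * Aᵀ * Y) =
      CFC.sqrt G * Aᵀ * Y * (Yᵀ * (A * G * Aᵀ) * Y)⁻¹ * Yᵀ * A * CFC.sqrt G := by
  rw [colProj, transpose_mul _ Y, ← transpose_mul_sqrt_mul_transpose_mul hG A]
  simp only [transpose_sqrt_mul_transpose, Matrix.mul_assoc]

end Sqrt

theorem stmt14_general {ι κ n : Type*} [Fintype ι] [DecidableEq ι] [Fintype κ] [DecidableEq κ]
    [Nonempty κ] [Fintype n] [DecidableEq n] (hcard : Fintype.card κ ≤ Fintype.card n)
    (ν : Measure ℝ) [IsProbabilityMeasure ν] [NullSingletonClass ν] [ν.IsNegInvariant]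
    (A : Matrix ι n ℝ) (hA : Function.Injective A.mulVec) (G : Matrix n n ℝ) (hG : G.PosDef)
    (hH : (A * G * Aᵀ).IsHermitian) :
    let S : Matrix n n ℝ := CFC.sqrt G
    let ET : Matrix n n ℝ := entrywiseIntegral
      (Measure.pi fun _ : ι => Measure.pi fun _ : κ => ν) fun Ω =>
        1 - S * Aᵀ * of Ω * ((of Ω)ᵀ * (A * G * Aᵀ) * of Ω)⁻¹ * (of Ω)ᵀ * A * S
    (1 - ((Fintype.card ι : ℝ) * ⨆ i, hH.eigenvalues i)⁻¹ • (S * Aᵀ * A * S) - ET).PosSemidef ∧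
      (1 - ET).PosDef := by
  intro S ET
  set C := S * Aᵀ
  set EP := entrywiseIntegral (Measure.pi fun _ : ι => Measure.pi fun _ : κ => ν)
    fun Ω => colProj (C * of Ω)
  have hgram : Cᵀ * C = A * G * Aᵀ := transpose_mul_sqrt_mul_transpose_mul hG.posSemidef A
  have hcogram : C * A * S = C * Cᵀ := by
    rw [transpose_sqrt_mul_transpose, Matrix.mul_assoc]
  have hET : ET = 1 - EP := by
    rw [← entrywiseIntegral_const_sub 1 (integrable_colProj_mul_apply ν C)]
    simp only [ET, C, S, colProj_sqrt_mul_transpose_mul hG.posSemidef]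
  have hpos : (C * Cᵀ).PosDef := hcogram ▸ posDef_sqrt_mul_transpose_mul_mul_sqrt hG hA
  have hle := inv_card_mul_smul_mul_transpose_le_of_posDef ν hcard hpos
    (hgram.trans_le (le_iSup_eigenvalues_smul_one_s14 hH))
  rw [hET, sub_sub_cancel, hcogram, sub_right_comm, sub_sub_cancel]
  exact ⟨le_iff.1 hle, posDef_entrywiseIntegral_colProj ν hcard hpos⟩

instance isNegInvariant_gaussianReal_zero (v : NNReal) : (gaussianReal 0 v).IsNegInvariant where
  neg_eq_self := gaussianReal_map_neg.trans (by rw [neg_zero])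

instance nullSingletonClass_gaussianReal_one (μ : ℝ) : NullSingletonClass (gaussianReal μ 1) :=
  nullSingletonClass_gaussianReal one_ne_zero

/-- with `A` of full column rank, `G` SPD (square root `S`),
`Ω` an `m×l` Gaussian random matrix (`1 ≤ l ≤ min{m,n}`) and
`T̂ = I - S Aᵀ Ω (Ωᵀ A G Aᵀ Ω)⁻¹ Ωᵀ A S`, one has
`E[T̂] ⪯ I - (S Aᵀ A S)/(m λ_max(A G Aᵀ))`, and in particular `E[T̂] ≺ I`. -/
theorem stmt14 {m n l : ℕ} (hl : 1 ≤ l) (hlm : l ≤ m) (hln : l ≤ n)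
    (A : Matrix (Fin m) (Fin n) ℝ) (hA : Function.Injective A.mulVec)
    (G : Matrix (Fin n) (Fin n) ℝ) (hG : G.PosDef)
    (hH : (A * G * Aᵀ).IsHermitian) :
    let S : Matrix (Fin n) (Fin n) ℝ := CFC.sqrt G
    let ET : Matrix (Fin n) (Fin n) ℝ := Matrix.of fun i j =>
      ∫ Ω : Fin m → Fin l → ℝ,
        ((1 : Matrix (Fin n) (Fin n) ℝ) - S * Aᵀ * Matrix.of Ω *
          ((Matrix.of Ω)ᵀ * (A * G * Aᵀ) * Matrix.of Ω)⁻¹ *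
          (Matrix.of Ω)ᵀ * A * S) i j
        ∂(Measure.pi fun _ : Fin m => Measure.pi fun _ : Fin l => gaussianReal 0 1)
    ((1 : Matrix (Fin n) (Fin n) ℝ)
        - ((m : ℝ) * ⨆ i, hH.eigenvalues i)⁻¹ • (S * Aᵀ * A * S) - ET).PosSemidef ∧
      ((1 : Matrix (Fin n) (Fin n) ℝ) - ET).PosDef := by
  have : NeZero l := .of_pos hl
  have h := stmt14_general (by simpa) (gaussianReal 0 1) (κ := Fin l) A hA G hG hH
  rwa [Fintype.card_fin] at h
end

section
/- Let A be an n×n real invertible matrix, Y, Z real n×l matrices with E = Yᵀ A Z invertible, and B an n×n real invertible matrix. Define Ξ = Z E⁻¹ Yᵀ, T = I − Ξ A, S = I − A Ξ, and the balancing Neumann–Neumann preconditioner P_BNN = T B⁻¹ S + Z E⁻¹ Yᵀ. Then the error transfer operator satisfies I − P_BNN A = T (I − B⁻¹ A) T. -/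
open Matrix

/-- The coarse-grid correction matrix `Ξ = Z E⁻¹ Yᵀ` with `E = Yᵀ A Z`: restrict by `Yᵀ`, solve the
coarse (Galerkin) problem, prolongate by `Z`. It is meaningful only if `E` is invertible; the matrix
inverse makes it `0` otherwise. -/
noncomputable def coarseCorrection {R m n l : Type*} [CommRing R] [Fintype m] [Fintype n]
    [Fintype l] [DecidableEq l] (A : Matrix m n R) (Y : Matrix m l R) (Z : Matrix n l R) :
    Matrix n m R :=
  Z * (Yᵀ * A * Z)⁻¹ * Yᵀ

/-- The abstract balancing preconditioner `T M S + G` for `A`, with `T = 1 - G A` and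
`S = 1 - A G`, combining a fine-level preconditioner `M` (the paper's `B⁻¹`) with a
correction `G` (the paper's `Ξ`). -/
def balancingPreconditioner {R m n : Type*} [Ring R] [Fintype m] [Fintype n] [DecidableEq m]
    [DecidableEq n] (A : Matrix m n R) (G M : Matrix n m R) : Matrix n m R :=
  (1 - G * A) * M * (1 - A * G) + G

section OuterInverse

variable {R m n : Type*} [Ring R] [Fintype m] [Fintype n] [DecidableEq n]

theorem one_sub_mul_mul_eq_mul_one_sub_mul [DecidableEq m] (A : Matrix m n R)
    (G : Matrix n m R) : (1 - A * G) * A = A * (1 - G * A) := by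
  rw [Matrix.sub_mul, Matrix.mul_sub, Matrix.one_mul, Matrix.mul_one, Matrix.mul_assoc]

theorem isIdempotentElem_one_sub_mul_of_mul_mul_eq {A : Matrix m n R} {G : Matrix n m R}
    (hG : G * A * G = G) : IsIdempotentElem (1 - G * A) := by
  have hGA : IsIdempotentElem (G * A) := by
    rw [IsIdempotentElem, ← Matrix.mul_assoc, hG]
  exact hGA.one_sub

theorem one_sub_balancingPreconditioner_mul [DecidableEq m] {A : Matrix m n R}
    {G : Matrix n m R} (hG : G * A * G = G) (M : Matrix n m R) :
    1 - balancingPreconditioner A G M * A = (1 - G * A) * (1 - M * A) * (1 - G * A) := by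
  have hT : (1 - G * A) * (1 - G * A) = 1 - G * A :=
    isIdempotentElem_one_sub_mul_of_mul_mul_eq hG
  calc 1 - balancingPreconditioner A G M * A
      = (1 - G * A) - (1 - G * A) * M * ((1 - A * G) * A) := by
        rw [balancingPreconditioner, Matrix.add_mul, Matrix.mul_assoc _ (1 - A * G) A]
        abel
    _ = (1 - G * A) * (1 - G * A) - (1 - G * A) * M * (A * (1 - G * A)) := by
        rw [hT, one_sub_mul_mul_eq_mul_one_sub_mul]
    _ = (1 - G * A) * (1 - M * A) * (1 - G * A) := by
        rw [Matrix.mul_sub _ 1 (M * A), Matrix.mul_one, Matrix.sub_mul (1 - G * A)]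
        simp only [Matrix.mul_assoc]

end OuterInverse

section CoarseCorrection

variable {R m n l : Type*} [CommRing R] [Fintype m] [Fintype n] [Fintype l] [DecidableEq l]

theorem coarseCorrection_mul_mul_coarseCorrection {A : Matrix m n R} {Y : Matrix m l R}
    {Z : Matrix n l R} (hE : IsUnit (Yᵀ * A * Z)) :
    coarseCorrection A Y Z * A * coarseCorrection A Y Z = coarseCorrection A Y Z := by
  have hdet : IsUnit (Yᵀ * A * Z).det := (Matrix.isUnit_iff_isUnit_det _).1 hE
  calc coarseCorrection A Y Z * A * coarseCorrection A Y Z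
      = Z * ((Yᵀ * A * Z)⁻¹ * (Yᵀ * A * Z)) * (Yᵀ * A * Z)⁻¹ * Yᵀ := by
        simp only [coarseCorrection, Matrix.mul_assoc]
    _ = coarseCorrection A Y Z := by
        rw [Matrix.nonsing_inv_mul _ hdet, Matrix.mul_one, coarseCorrection]

theorem stmt18_general [DecidableEq m] [DecidableEq n] (A : Matrix m n R) (M : Matrix n m R)
    (Y : Matrix m l R) (Z : Matrix n l R) (hE : IsUnit (Yᵀ * A * Z)) :
    let T : Matrix n n R := 1 - coarseCorrection A Y Z * A
    1 - balancingPreconditioner A (coarseCorrection A Y Z) M * A = T * (1 - M * A) * T :=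
  one_sub_balancingPreconditioner_mul (coarseCorrection_mul_mul_coarseCorrection hE) M

end CoarseCorrection

/-- the error transfer operator of the abstract balancing
Neumann-Neumann preconditioner `P_BNN = T B⁻¹ S + Z E⁻¹ Yᵀ` satisfies
`I - P_BNN A = T (I - B⁻¹ A) T`. -/
theorem stmt18 {n l : ℕ} (A B : Matrix (Fin n) (Fin n) ℝ)
    (hA : IsUnit A) (hB : IsUnit B)
    (Y Z : Matrix (Fin n) (Fin l) ℝ) (hE : IsUnit (Yᵀ * A * Z)) :
    let Ξ : Matrix (Fin n) (Fin n) ℝ := Z * (Yᵀ * A * Z)⁻¹ * Yᵀ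
    let T : Matrix (Fin n) (Fin n) ℝ := 1 - Ξ * A
    let S : Matrix (Fin n) (Fin n) ℝ := 1 - A * Ξ
    let P : Matrix (Fin n) (Fin n) ℝ := T * B⁻¹ * S + Z * (Yᵀ * A * Z)⁻¹ * Yᵀ
    1 - P * A = T * (1 - B⁻¹ * A) * T :=
  stmt18_general A B⁻¹ Y Z hE
end
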